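/- arXiv:2310.14582 — 2 statements merged into one kernel-verified Lean document; each statement's English description precedes it below -/
import Mathlib

section
/- Let (A_i)_{i∈I} be unital subalgebras of A, (F_i)_{i∈I} subalgebras of F, and for each i ∈ I let B_i be the unital subalgebra of B generated by A_i ∪ F_i. If the family (A_i, F_i)_{i∈I} is B′-free in (A, φ, F, Φ), then the subalgebras (B_i)_{i∈I} are infinitesimally free with respect to (φ, φ′). -/
open scoped BigOperators

namespace TypeBPrime

variable {B : Type*} [Ring B] [Algebra ℂ B]

/-- The alternating word `a 0 * (f 0 * a 1) * ⋯ * (f (n-1) * a n)`. -/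
def altWord {n : ℕ} (a : Fin (n + 1) → B) (f : Fin n → B) : B :=
  a 0 * (List.ofFn fun k : Fin n => f k * a k.succ).prod

/-- Cyclic-antimonotone independence of the pair `(A₁, F₁)` with respect to `(φ, Φ)`:
`Φ(a₀ f₁ a₁ ⋯ fₙ aₙ) = φ(a₀ aₙ) · φ(a₁) ⋯ φ(a_{n-1}) · Φ(f₁ ⋯ fₙ)` for all `n ≥ 1`. -/
def CyclicAntimonotone (φ Φ : B → ℂ) (A₁ F₁ : Set B) : Prop :=
  ∀ n : ℕ, 0 < n → ∀ (a : Fin (n + 1) → B) (f : Fin n → B),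
    (∀ k, a k ∈ A₁) → (∀ k, f k ∈ F₁) →
    Φ (altWord a f) =
      φ (a 0 * a (Fin.last n)) *
        (∏ k ∈ Finset.Ioo (0 : Fin (n + 1)) (Fin.last n), φ (a k)) *
        Φ (List.ofFn f).prod

/-- Freeness of a family of subsets with respect to `φ`:
alternating words in centered elements are centered. -/
def IsFreeFamily {ι : Type*} (φ : B → ℂ) (Alg : ι → Set B) : Prop :=
  ∀ (n : ℕ) (idx : Fin (n + 1) → ι) (a : Fin (n + 1) → B),
    (∀ k : Fin n, idx k.castSucc ≠ idx k.succ) →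
    (∀ k, a k ∈ Alg (idx k)) → (∀ k, φ (a k) = 0) →
    φ (List.ofFn a).prod = 0

/-- Infinitesimal freeness of a family of subsets with respect to `(φ, φ')`. -/
def IsInfFree {ι : Type*} (φ φ' : B → ℂ) (Alg : ι → Set B) : Prop :=
  IsFreeFamily φ Alg ∧
  (∀ (n : ℕ) (idx : Fin (n + 1) → ι) (b : Fin (n + 1) → B),
    (∀ k : Fin n, idx k.castSucc ≠ idx k.succ) →
    (∀ k, b k ∈ Alg (idx k)) → (∀ k, φ (b k) = 0) →
    ¬(Even n ∧ ∀ k, idx k = idx k.rev) →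
    φ' (List.ofFn b).prod = 0) ∧
  (∀ (m : ℕ) (idx : Fin (2 * m + 1) → ι) (b : Fin (2 * m + 1) → B),
    (∀ k : Fin (2 * m), idx k.castSucc ≠ idx k.succ) →
    (∀ k, b k ∈ Alg (idx k)) → (∀ k, φ (b k) = 0) →
    (∀ k, idx k = idx k.rev) →
    φ' (List.ofFn b).prod =
      (∏ j : Fin m,
          φ (b (Fin.castLE (by omega) j) * b (Fin.castLE (by omega) j).rev)) *
        φ' (b ⟨m, by omega⟩))

/-- Trivial independence with respect to `Φ`: alternating words of length `≥ 2` vanish. -/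
def TrivIndep {ι : Type*} (Φ : B → ℂ) (Fj : ι → Set B) : Prop :=
  ∀ (n : ℕ) (idx : Fin (n + 2) → ι) (f : Fin (n + 2) → B),
    (∀ k : Fin (n + 1), idx k.castSucc ≠ idx k.succ) →
    (∀ k, f k ∈ Fj (idx k)) →
    Φ (List.ofFn f).prod = 0

/-- Boolean independence with respect to `ψ`. -/
def BoolIndep {ι : Type*} (ψ : B → ℂ) (C : ι → Set B) : Prop :=
  ∀ (n : ℕ) (idx : Fin (n + 1) → ι) (c : Fin (n + 1) → B),
    (∀ k : Fin n, idx k.castSucc ≠ idx k.succ) →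
    (∀ k, c k ∈ C (idx k)) →
    ψ (List.ofFn c).prod = ∏ k, ψ (c k)

/-- Conditional freeness with respect to `(φ, ψ)`. -/
def CFree {ι : Type*} (φ ψ : B → ℂ) (Alg : ι → Set B) : Prop :=
  IsFreeFamily φ Alg ∧
  ∀ (n : ℕ) (idx : Fin (n + 1) → ι) (b : Fin (n + 1) → B),
    (∀ k : Fin n, idx k.castSucc ≠ idx k.succ) →
    (∀ k, b k ∈ Alg (idx k)) → (∀ k, φ (b k) = 0) →
    ψ (List.ofFn b).prod = ∏ k, ψ (b k)

/-- The unital subspace `ℂ·1_B + F₁`. -/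
def unitize (F₁ : Set B) : Set B :=
  {x | ∃ c : ℂ, ∃ f ∈ F₁, x = algebraMap ℂ B c + f}

/-- The set of alternating words `a₀ f₁ a₁ ⋯ fₙ aₙ` with letters from `A₁` and `F₁`. -/
def wordSet (A₁ F₁ : Set B) : Set B :=
  {x | ∃ n : ℕ, 0 < n ∧ ∃ (a : Fin (n + 1) → B) (f : Fin n → B),
    (∀ k, a k ∈ A₁) ∧ (∀ k, f k ∈ F₁) ∧ x = altWord a f}

/-- `A₁⟨F₁⟩₀`: the linear span of all alternating words `a₀ f₁ a₁ ⋯ fₙ aₙ`. -/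
def wordSpan (A₁ F₁ : Set B) : Set B :=
  (Submodule.span ℂ (wordSet A₁ F₁) : Submodule ℂ B)

/-- The type B′ subalgebra `A₁⟨F₁⟩ = A₁ + A₁⟨F₁⟩₀`. -/
def typeBSub (A₁ F₁ : Set B) : Set B :=
  {x | ∃ a ∈ A₁, ∃ f ∈ wordSpan A₁ F₁, x = a + f}

/-- `(tₙ)` is the inverse Markov–Krein transform of the sequence `(mₙ)`:
`(n+1)·mₙ = Σ_{j=0}^{n} tⱼ m_{n−j}` for all `n ≥ 0`. -/
def IsInvMK (m t : ℕ → ℂ) : Prop :=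
  ∀ n : ℕ, ((n : ℂ) + 1) * m n = ∑ j ∈ Finset.range (n + 1), t j * m (n - j)

set_option linter.unusedSectionVars false

/-- The product of the second components of a list of indexed letters. -/
def pr {ι : Type*} (L : List (ι × B)) : B := (L.map Prod.snd).prod

/-- `L` is an alternating list of centered letters, its head index different from `i`. -/
def AltFrom {ι : Type*} (φ : B → ℂ) (Alg : ι → Set B) : ι → List (ι × B) → Prop
  | _, [] => True
  | i, (j, b) :: L => i ≠ j ∧ b ∈ Alg j ∧ φ b = 0 ∧ AltFrom φ Alg j L

/-- `v` is a word `f₁ a₁ f₂ ⋯ fₙ` and `u = φ(a₁) ⋯ φ(a_{n-1}) f₁ ⋯ fₙ`. -/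
def Red (φ : B → ℂ) (AA FF : Set B) (v u : B) : Prop :=
  ∃ (l : List (B × B)) (e : B), (∀ p ∈ l, p.1 ∈ FF ∧ p.2 ∈ AA) ∧ e ∈ FF ∧
    v = (l.map fun p => p.1 * p.2).prod * e ∧
    u = (l.map fun p => φ p.2).prod • ((l.map Prod.fst).prod * e)

theorem Red.base {φ : B → ℂ} {AA FF : Set B} {e : B} (he : e ∈ FF) : Red φ AA FF e e :=
  ⟨[], e, by simp, he, by simp, by simp⟩

theorem Red.merge {φ : B → ℂ} {AA FF : Set B} {v u v' u' a : B}
    (h : Red φ AA FF v u) (ha : a ∈ AA) (h' : Red φ AA FF v' u') :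
    Red φ AA FF (v * a * v') (φ a • (u * u')) := by
  obtain ⟨l, e, hl, he, rfl, rfl⟩ := h
  obtain ⟨l', e', hl', he', rfl, rfl⟩ := h'
  refine ⟨l ++ (e, a) :: l', e', ?_, he', ?_, ?_⟩
  · intro p hp
    simp only [List.mem_append, List.mem_cons] at hp
    rcases hp with hp | rfl | hp
    · exact hl p hp
    · exact ⟨he, ha⟩
    · exact hl' p hp
  · simp [mul_assoc]
  · simp only [List.map_append, List.map_cons, List.prod_append, List.prod_cons, smul_mul_smul_comm,
      smul_smul, mul_assoc]
    congr 1
    ring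

/-- The words `x v y` of the type B′ algebra of one index. -/
def Gset (φ : B → ℂ) (AA FF : Set B) (A₁ : Subalgebra ℂ B) (F₁ : NonUnitalSubalgebra ℂ B) : Set B :=
  {g | ∃ x ∈ A₁, ∃ y ∈ A₁, ∃ v, ∃ u ∈ F₁, Red φ AA FF v u ∧ g = x * v * y}

/-- List form of cyclic-antimonotone independence. -/
theorem cam_fin {φ Φ : B → ℂ} {AA FF : Set B} (h : CyclicAntimonotone φ Φ AA FF)
    {n : ℕ} (x y : B) (c : Fin n → B) (f : Fin (n + 1) → B) (hx : x ∈ AA) (hy : y ∈ AA)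
    (hc : ∀ k, c k ∈ AA) (hf : ∀ k, f k ∈ FF) :
    Φ (x * (List.ofFn fun k => f k * (Fin.snoc c y : Fin (n + 1) → B) k).prod) =
      φ (x * y) * (∏ k, φ (c k)) * Φ (List.ofFn f).prod := by
  have := h (n + 1) (Nat.succ_pos _) (Fin.cons x (Fin.snoc c y : Fin (n + 1) → B)) f ?_ hf
  · rw [altWord] at this
    simp only [Fin.cons_zero, Fin.cons_succ] at this
    rw [this]
    have e : Finset.Ioo (0 : Fin (n + 2)) (Fin.last (n + 1)) =
        Finset.univ.map ⟨fun k : Fin n => k.castSucc.succ, by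
          intro a b hab; simpa using hab⟩ := by
      ext k
      simp only [Finset.mem_Ioo, Finset.mem_map, Finset.mem_univ, true_and]
      constructor
      · rintro ⟨h1, h2⟩
        refine ⟨⟨k.1 - 1, ?_⟩, ?_⟩
        · rw [Fin.lt_def] at h1 h2
          rw [Fin.val_last] at h2
          rw [Fin.val_zero] at h1
          omega
        · rw [Fin.lt_def, Fin.val_zero] at h1
          ext
          change k.1 - 1 + 1 = k.1
          omega
      · rintro ⟨a, rfl⟩
        constructor
        · exact Fin.succ_pos _
        · rw [Fin.lt_def, Fin.val_last]
          change a.1 + 1 < n + 1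
          omega
    rw [e, Finset.prod_map]
    congr 2
    · rw [← Fin.succ_last, Fin.cons_succ, Fin.snoc_last]
    · refine Finset.prod_congr rfl fun k _ => ?_
      change φ ((Fin.cons x (Fin.snoc c y : Fin (n + 1) → B) : Fin (n + 2) → B) k.castSucc.succ) = _
      rw [Fin.cons_succ, Fin.snoc_castSucc]
  · intro k
    refine Fin.cases ?_ (fun k => ?_) k
    · simpa
    · rw [Fin.cons_succ]
      refine Fin.lastCases ?_ (fun k => ?_) k
      · simpa
      · simpa using hc k

theorem cam_red {φ Φ : B →ₗ[ℂ] ℂ} {AA FF FF' : Set B} (h : CyclicAntimonotone φ Φ AA FF)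
    (hFF : FF' ⊆ FF) {v u x y : B} (hr : Red φ AA FF' v u) (hx : x ∈ AA) (hy : y ∈ AA) :
    Φ (x * v * y) = φ (x * y) * Φ u := by
  obtain ⟨l, e, hl, he, rfl, rfl⟩ := hr
  have := cam_fin h x y (fun k : Fin l.length => (l.get k).2)
    (Fin.snoc (fun k : Fin l.length => (l.get k).1) e) hx hy
    (fun k => (hl _ (l.get_mem k)).2) ?_
  · rw [List.ofFn_succ', List.ofFn_succ'] at this
    simp only [Fin.snoc_castSucc, Fin.snoc_last, List.prod_append, List.concat_eq_append,
      List.prod_singleton] at this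
    have e1 : (List.ofFn fun k : Fin l.length => (l.get k).1 * (l.get k).2) =
        l.map fun p => p.1 * p.2 := by
      conv_rhs => rw [← List.ofFn_get l, List.map_ofFn]
      rfl
    have e2 : (List.ofFn fun k : Fin l.length => (l.get k).1) = l.map Prod.fst := by
      conv_rhs => rw [← List.ofFn_get l, List.map_ofFn]
      rfl
    have e3 : (∏ k : Fin l.length, φ (l.get k).2) = (l.map fun p => φ p.2).prod := by
      conv_rhs => rw [← List.ofFn_get l, List.map_ofFn, List.prod_ofFn]
      rfl
    rw [e1, e2, e3] at this
    rw [map_smul, smul_eq_mul, ← mul_assoc (φ (x * y)), ← this]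
    simp only [mul_assoc]
  · intro k
    refine Fin.lastCases ?_ (fun k => ?_) k
    · simpa using hFF he
    · rw [Fin.snoc_castSucc]
      exact hFF (hl _ (l.get_mem k)).1

/-- `u` stays null under `Φ` after right multiplication by any product of letters from `FF`. -/
def Dead (Φ : B → ℂ) (FF : Set B) (u : B) : Prop :=
  ∀ M : List B, (∀ m ∈ M, m ∈ FF) → Φ (u * M.prod) = 0

theorem Dead.mul {Φ : B → ℂ} {FF : Set B} {u f : B} (h : Dead Φ FF u) (hf : f ∈ FF) :
    Dead Φ FF (u * f) := by
  intro M hM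
  have := h (f :: M) (by simpa using ⟨hf, hM⟩)
  simpa [mul_assoc] using this

theorem Dead.smul {Φ : B →ₗ[ℂ] ℂ} {FF : Set B} {u : B} (h : Dead Φ FF u) (c : ℂ) :
    Dead Φ FF (c • u) := by
  intro M hM
  rw [smul_mul_assoc, map_smul, h M hM, smul_zero]

theorem dead_zero {Φ : B →ₗ[ℂ] ℂ} {FF : Set B} : Dead Φ FF 0 := by
  intro M hM
  simp

/-- Trivial independence, list form. -/
theorem triv_list {ι : Type*} {Φ : B → ℂ} {Fj : ι → Set B} (h : TrivIndep Φ Fj)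
    (L : List (ι × B)) (p q : ι × B)
    (hc : (p :: q :: L).IsChain fun s t => s.1 ≠ t.1) (hm : ∀ s ∈ p :: q :: L, s.2 ∈ Fj s.1) :
    Φ (pr (p :: q :: L)) = 0 := by
  have := h L.length (fun k => ((p :: q :: L).get k).1) (fun k => ((p :: q :: L).get k).2) ?_ ?_
  · rw [← this]
    congr 1
    rw [pr]
    conv_lhs => rw [← List.ofFn_get (p :: q :: L), List.map_ofFn]
    rfl
  · intro k
    have := (List.isChain_iff_getElem.1 hc) k.1 (by have := k.2; simp only [List.length_cons]; omega)
    simpa using this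
  · intro k
    exact hm _ (List.get_mem (p :: q :: L) k)

theorem merge_list {ι : Type*} (Fi : ι → NonUnitalSubalgebra ℂ B) (M : List B) :
    ∀ (j : ι) (f : B), f ∈ Fi j → (∀ m ∈ M, ∃ k, m ∈ Fi k) →
    ∃ (f' : B) (L : List (ι × B)), ((j, f') :: L).IsChain (fun s t => s.1 ≠ t.1) ∧
      (∀ s ∈ (j, f') :: L, s.2 ∈ Fi s.1) ∧ f * M.prod = pr ((j, f') :: L) := by
  induction M with
  | nil =>
    intro j f hf _
    exact ⟨f, [], by simp, by simpa using hf, by simp [pr]⟩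
  | cons m M ih =>
    intro j f hf hM
    simp only [List.mem_cons, forall_eq_or_imp] at hM
    obtain ⟨⟨k, hk⟩, hM⟩ := hM
    obtain ⟨f', L, hc, hm, e⟩ := ih k m hk hM
    by_cases hjk : j = k
    · subst hjk
      refine ⟨f * f', L, ?_, ?_, ?_⟩
      · cases L with
        | nil => simp
        | cons q L => simpa using hc
      · simp only [List.mem_cons, forall_eq_or_imp] at hm ⊢
        exact ⟨mul_mem hf hm.1, hm.2⟩
      · rw [List.prod_cons, e]; simp [pr, mul_assoc]
    · refine ⟨f, (k, f') :: L, ?_, ?_, ?_⟩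
      · exact List.IsChain.cons_cons hjk hc
      · intro s hs
        rcases List.mem_cons.1 hs with rfl | hs
        · exact hf
        · exact hm s hs
      · rw [List.prod_cons, e]; simp [pr]

theorem dead_mul {ι : Type*} {Φ : B → ℂ} {Fi : ι → NonUnitalSubalgebra ℂ B}
    (h : TrivIndep Φ (fun i => (Fi i : Set B))) {i j : ι} (hij : i ≠ j) {f g : B}
    (hf : f ∈ Fi i) (hg : g ∈ Fi j) : Dead Φ (⋃ i, (Fi i : Set B)) (f * g) := by
  intro M hM
  obtain ⟨g', L, hc, hm, e⟩ := merge_list Fi M j g hg (by simpa using hM)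
  rw [mul_assoc, e]
  have := triv_list h L (i, f) (j, g') (List.IsChain.cons_cons hij hc) ?_
  · simpa [pr] using this
  · intro s hs
    rcases List.mem_cons.1 hs with rfl | hs
    · exact hf
    · exact hm s hs

/-- Standing hypotheses, with `AA` the algebra generated by the `Ai`. -/
structure Hyp {ι : Type*} (A AA : Subalgebra ℂ B) (F : Submodule ℂ B) (φ Φ φ' : B →ₗ[ℂ] ℂ)
    (Ai : ι → Subalgebra ℂ B) (Fi : ι → NonUnitalSubalgebra ℂ B) : Prop where
  mulL : ∀ b : B, ∀ f ∈ F, b * f ∈ F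
  mulR : ∀ b : B, ∀ f ∈ F, f * b ∈ F
  one : φ 1 = 1
  φF : ∀ f ∈ F, φ f = 0
  φ'A : ∀ a ∈ A, φ' a = 0
  φ'F : ∀ f ∈ F, φ' f = Φ f
  AiAA : ∀ i, Ai i ≤ AA
  AAA : AA ≤ A
  FiF : ∀ i, ∀ f ∈ Fi i, f ∈ F
  free : IsFreeFamily φ (fun i => (Ai i : Set B))
  cam : ∀ v u x y : B, Red φ AA (⋃ i, (Fi i : Set B)) v u → x ∈ AA → y ∈ AA →
    Φ (x * v * y) = φ (x * y) * Φ u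
  triv : TrivIndep Φ (fun i => (Fi i : Set B))

/-- The algebra generated by `Ai i` and `Fi i`. -/
abbrev Bi {ι : Type*} (Ai : ι → Subalgebra ℂ B) (Fi : ι → NonUnitalSubalgebra ℂ B) (i : ι) :
    Subalgebra ℂ B := Algebra.adjoin ℂ ((Ai i : Set B) ∪ (Fi i : Set B))

/-- The words of index `i`. -/
abbrev Gi {ι : Type*} (φ : B →ₗ[ℂ] ℂ) (AA : Subalgebra ℂ B) (Ai : ι → Subalgebra ℂ B)
    (Fi : ι → NonUnitalSubalgebra ℂ B) (i : ι) : Submodule ℂ B :=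
  Submodule.span ℂ (Gset φ AA (⋃ i, (Fi i : Set B)) (Ai i) (Fi i))

section
variable {ι : Type*} {A AA : Subalgebra ℂ B} {F : Submodule ℂ B} {φ Φ φ' : B →ₗ[ℂ] ℂ}
    {Ai : ι → Subalgebra ℂ B} {Fi : ι → NonUnitalSubalgebra ℂ B}

theorem Gi_mulL {i : ι} {a g : B} (ha : a ∈ Ai i) (hg : g ∈ Gi φ AA Ai Fi i) :
    a * g ∈ Gi φ AA Ai Fi i := by
  induction hg using Submodule.span_induction with
  | mem g hg =>
    obtain ⟨x, hx, y, hy, v, u, hu, hr, rfl⟩ := hg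
    exact Submodule.subset_span ⟨a * x, mul_mem ha hx, y, hy, v, u, hu, hr, by simp [mul_assoc]⟩
  | zero => simp
  | add g g' _ _ h h' => rw [mul_add]; exact add_mem h h'
  | smul c g _ h => rw [mul_smul_comm]; exact Submodule.smul_mem _ _ h

theorem Gi_mulR {i : ι} {a g : B} (ha : a ∈ Ai i) (hg : g ∈ Gi φ AA Ai Fi i) :
    g * a ∈ Gi φ AA Ai Fi i := by
  induction hg using Submodule.span_induction with
  | mem g hg =>
    obtain ⟨x, hx, y, hy, v, u, hu, hr, rfl⟩ := hg
    exact Submodule.subset_span ⟨x, hx, y * a, mul_mem hy ha, v, u, hu, hr, by simp [mul_assoc]⟩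
  | zero => simp
  | add g g' _ _ h h' => rw [add_mul]; exact add_mem h h'
  | smul c g _ h => rw [smul_mul_assoc]; exact Submodule.smul_mem _ _ h

theorem Gi_mul (H : Hyp A AA F φ Φ φ' Ai Fi) {i : ι} {g g' : B} (hg : g ∈ Gi φ AA Ai Fi i)
    (hg' : g' ∈ Gi φ AA Ai Fi i) : g * g' ∈ Gi φ AA Ai Fi i := by
  induction hg using Submodule.span_induction with
  | mem g hg =>
    induction hg' using Submodule.span_induction with
    | mem g' hg' =>
      obtain ⟨x, hx, y, hy, v, u, hu, hr, rfl⟩ := hg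
      obtain ⟨x', hx', y', hy', v', u', hu', hr', rfl⟩ := hg'
      exact Submodule.subset_span ⟨x, hx, y', hy', v * (y * x') * v', φ (y * x') • (u * u'),
        SMulMemClass.smul_mem _ (mul_mem hu hu'),
        hr.merge (H.AiAA i (mul_mem hy hx')) hr', by simp [mul_assoc]⟩
    | zero => simp
    | add g g' _ _ h h' => rw [mul_add]; exact add_mem h h'
    | smul c g _ h => rw [mul_smul_comm]; exact Submodule.smul_mem _ _ h
  | zero => simp
  | add g g' _ _ h h' => rw [add_mul]; exact add_mem h h'
  | smul c g _ h => rw [smul_mul_assoc]; exact Submodule.smul_mem _ _ h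

theorem Red.memF (H : Hyp A AA F φ Φ φ' Ai Fi) {v u : B}
    (h : Red φ AA (⋃ i, (Fi i : Set B)) v u) : v ∈ F := by
  obtain ⟨l, e, hl, he, rfl, rfl⟩ := h
  obtain ⟨i, hi⟩ := Set.mem_iUnion.1 he
  exact H.mulL _ _ (H.FiF i e hi)

theorem Gi_le (H : Hyp A AA F φ Φ φ' Ai Fi) {i : ι} {g : B} (hg : g ∈ Gi φ AA Ai Fi i) :
    g ∈ F := by
  refine (Submodule.span_le (p := F)).2 ?_ hg
  rintro g ⟨x, hx, y, hy, v, u, hu, hr, rfl⟩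
  exact H.mulR _ _ (H.mulL _ _ (hr.memF H))

theorem decomp (H : Hyp A AA F φ Φ φ' Ai Fi) {i : ι} {b : B} (hb : b ∈ Bi Ai Fi i) :
    ∃ a ∈ Ai i, ∃ g ∈ Gi φ AA Ai Fi i, b = a + g := by
  induction hb using Algebra.adjoin_induction with
  | mem x hx =>
    rcases hx with hx | hx
    · exact ⟨x, hx, 0, zero_mem _, by simp⟩
    · exact ⟨0, zero_mem _, x, Submodule.subset_span ⟨1, one_mem _, 1, one_mem _, x, x, hx,
        Red.base (Set.mem_iUnion.2 ⟨i, hx⟩), by simp⟩, by simp⟩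
  | algebraMap r => exact ⟨algebraMap ℂ B r, Subalgebra.algebraMap_mem _ r, 0, zero_mem _, by simp⟩
  | add x y _ _ h h' =>
    obtain ⟨a, ha, g, hg, rfl⟩ := h
    obtain ⟨a', ha', g', hg', rfl⟩ := h'
    exact ⟨a + a', add_mem ha ha', g + g', add_mem hg hg', by abel⟩
  | mul x y _ _ h h' =>
    obtain ⟨a, ha, g, hg, rfl⟩ := h
    obtain ⟨a', ha', g', hg', rfl⟩ := h'
    exact ⟨a * a', mul_mem ha ha', a * g' + g * a' + g * g',
      add_mem (add_mem (Gi_mulL ha hg') (Gi_mulR ha' hg)) (Gi_mul H hg hg'), by noncomm_ring⟩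

theorem Ai_le_Bi {i : ι} {a : B} (ha : a ∈ Ai i) : a ∈ Bi Ai Fi i :=
  Algebra.subset_adjoin (Or.inl ha)

/-- Centered decomposition. -/
theorem decomp0 (H : Hyp A AA F φ Φ φ' Ai Fi) {i : ι} {b : B} (hb : b ∈ Bi Ai Fi i)
    (h0 : φ b = 0) : ∃ a ∈ Ai i, φ a = 0 ∧ ∃ g ∈ Gi φ AA Ai Fi i, b = a + g := by
  obtain ⟨a, ha, g, hg, rfl⟩ := decomp H hb
  refine ⟨a, ha, ?_, g, hg, rfl⟩
  rwa [map_add, H.φF g (Gi_le H hg), add_zero] at h0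

theorem φ_drop (H : Hyp A AA F φ Φ φ' Ai Fi) {i : ι} {g : B} (hg : g ∈ Gi φ AA Ai Fi i)
    (x a y : B) : φ (x * (a + g) * y) = φ (x * a * y) := by
  rw [mul_add, add_mul, map_add, H.φF _ (H.mulR _ _ (H.mulL _ _ (Gi_le H hg))), add_zero]

/-- Freeness, list form, over the `Ai`. -/
theorem free_list {φ : B → ℂ} {Alg : ι → Set B} (h : IsFreeFamily φ Alg) (i : ι) (b : B)
    (hb : b ∈ Alg i) (h0 : φ b = 0) (L : List (ι × B)) (hL : AltFrom φ Alg i L) :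
    φ (b * pr L) = 0 := by
  have key : ∀ (L : List (ι × B)) (i : ι) (b : B), AltFrom φ Alg i L →
      ((i, b) :: L).IsChain (fun s t => s.1 ≠ t.1) ∧ ∀ s ∈ L, s.2 ∈ Alg s.1 ∧ φ s.2 = 0 := by
    intro L
    induction L with
    | nil => intro i b _; simp
    | cons p L ih =>
      obtain ⟨j, c⟩ := p
      rintro i b ⟨h1, h2, h3, h4⟩
      obtain ⟨k1, k2⟩ := ih j c h4
      refine ⟨List.IsChain.cons_cons h1 k1, ?_⟩
      intro s hs
      rcases List.mem_cons.1 hs with rfl | hs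
      · exact ⟨h2, h3⟩
      · exact k2 s hs
  obtain ⟨hc, hm⟩ := key L i b hL
  have hm' : ∀ s ∈ (i, b) :: L, s.2 ∈ Alg s.1 ∧ φ s.2 = 0 := by
    intro s hs
    rcases List.mem_cons.1 hs with rfl | hs
    · exact ⟨hb, h0⟩
    · exact hm s hs
  have := h L.length (fun k => (((i, b) :: L).get k).1) (fun k => (((i, b) :: L).get k).2) ?_ ?_ ?_
  · rw [← this]
    congr 1
    have e : b * pr L = (((i, b) :: L).map Prod.snd).prod := by simp [pr]
    rw [e]
    conv_lhs => rw [← List.ofFn_get ((i, b) :: L), List.map_ofFn]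
    rfl
  · intro k
    have := (List.isChain_iff_getElem.1 hc) k.1 (by have := k.2; simp only [List.length_cons]; omega)
    simpa using this
  · intro k
    exact (hm' _ (List.get_mem ((i, b) :: L) k)).1
  · intro k
    exact (hm' _ (List.get_mem ((i, b) :: L) k)).2

/-- Centered alternating lists over the `Bi`. -/
abbrev AltB (φ : B →ₗ[ℂ] ℂ) (Ai : ι → Subalgebra ℂ B) (Fi : ι → NonUnitalSubalgebra ℂ B) :
    ι → List (ι × B) → Prop := AltFrom φ (fun i => (Bi Ai Fi i : Set B))

theorem pr_cons (p : ι × B) (L : List (ι × B)) : pr (p :: L) = p.2 * pr L := by simp [pr]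

/-- Replace the letters from the `Bi` by letters from the `Ai`. -/
theorem to_A (H : Hyp A AA F φ Φ φ' Ai Fi) (L : List (ι × B)) : ∀ i, AltB φ Ai Fi i L →
    ∃ L', AltFrom φ (fun i => (Ai i : Set B)) i L' ∧ ∀ x, φ (x * pr L) = φ (x * pr L') := by
  induction L with
  | nil => exact fun i _ => ⟨[], trivial, fun _ => rfl⟩
  | cons p L ih =>
    obtain ⟨j, b⟩ := p
    rintro i ⟨h1, h2, h3, h4⟩
    obtain ⟨L', hL', e⟩ := ih j h4
    obtain ⟨a, ha, ha0, g, hg, rfl⟩ := decomp0 H h2 h3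
    refine ⟨(j, a) :: L', ⟨h1, ha, ha0, hL'⟩, fun x => ?_⟩
    rw [pr_cons, pr_cons, ← mul_assoc, ← mul_assoc, φ_drop H hg, e]

theorem free_B (H : Hyp A AA F φ Φ φ' Ai Fi) (i : ι) (b : B)
    (hb : b ∈ Bi Ai Fi i) (h0 : φ b = 0) (L : List (ι × B)) (hL : AltB φ Ai Fi i L) :
    φ (b * pr L) = 0 := by
  obtain ⟨L', hL', e⟩ := to_A H L i hL
  obtain ⟨a, ha, ha0, g, hg, rfl⟩ := decomp0 H hb h0
  rw [e]
  have := φ_drop H hg 1 a (pr L')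
  rw [one_mul, one_mul] at this
  rw [this]
  have hres := free_list H.free i a ha ha0 L' hL'
  exact hres

/-- `z` times any alternating centered word starting with index `j` is centered. -/
def Qr (φ : B →ₗ[ℂ] ℂ) (Ai : ι → Subalgebra ℂ B) (Fi : ι → NonUnitalSubalgebra ℂ B)
    (z : B) (j : ι) : Prop :=
  ∀ b ∈ Bi Ai Fi j, φ b = 0 → ∀ L, AltB φ Ai Fi j L → φ (z * b * pr L) = 0

theorem Qr.step {z b : B} {j k : ι} (h : Qr φ Ai Fi z j) (hb : b ∈ Bi Ai Fi j) (h0 : φ b = 0)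
    (hjk : j ≠ k) : Qr φ Ai Fi (z * b) k := by
  intro c hc hc0 L hL
  have := h b hb h0 ((k, c) :: L) ⟨hjk, hc, hc0, hL⟩
  rwa [pr_cons, ← mul_assoc] at this

theorem Qr.self {z b : B} {j : ι} (h : Qr φ Ai Fi z j) (hb : b ∈ Bi Ai Fi j) (h0 : φ b = 0) :
    φ (z * b) = 0 := by
  have := h b hb h0 [] trivial
  simpa [pr] using this

theorem Qr.one (H : Hyp A AA F φ Φ φ' Ai Fi) (j : ι) : Qr φ Ai Fi 1 j := by
  intro b hb h0 L hL
  rw [one_mul]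
  exact free_B H j b hb h0 L hL

/-- Centering. -/
theorem center (H : Hyp A AA F φ Φ φ' Ai Fi) {j : ι} {b : B} (hb : b ∈ Bi Ai Fi j) :
    ∃ c ∈ Bi Ai Fi j, φ c = 0 ∧ b = c + φ b • (1 : B) := by
  refine ⟨b - φ b • (1 : B), sub_mem hb (Subalgebra.smul_mem _ (one_mem _) _), ?_, by simp⟩
  rw [map_sub, map_smul, H.one]
  simp

/-- Split off a not necessarily centered letter. -/
theorem Qr.split (H : Hyp A AA F φ Φ φ' Ai Fi) {z b : B} {j : ι} (h : Qr φ Ai Fi z j)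
    (hb : b ∈ Bi Ai Fi j) {L : List (ι × B)} (hL : AltB φ Ai Fi j L) :
    φ (z * b * pr L) = φ b * φ (z * pr L) := by
  obtain ⟨c, hc, hc0, e⟩ := center H hb
  rw [e, mul_add, add_mul, map_add, h c hc hc0 L hL, zero_add, ← e]
  simp

theorem Qr.of_ne (H : Hyp A AA F φ Φ φ' Ai Fi) {y : B} {i j : ι} (hy : y ∈ Bi Ai Fi i)
    (hij : i ≠ j) : Qr φ Ai Fi y j := by
  intro b hb h0 L hL
  have := Qr.split H (Qr.one H i) hy (L := (j, b) :: L) ⟨hij, hb, h0, hL⟩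
  rw [pr_cons, one_mul, one_mul, free_B H j b hb h0 L hL, mul_zero, ← mul_assoc] at this
  exact this

theorem mem_FF {i : ι} {f : B} (h : f ∈ Fi i) : f ∈ ⋃ i, (Fi i : Set B) := Set.mem_iUnion.2 ⟨i, h⟩


theorem Gi_zero {i : ι} {g X Y : B} (hg : g ∈ Gi φ AA Ai Fi i)
    (h : ∀ x ∈ Ai i, ∀ y ∈ Ai i, ∀ v, ∀ u ∈ Fi i, Red φ AA (⋃ i, (Fi i : Set B)) v u →
      Φ (X * (x * v * y) * Y) = 0) : Φ (X * g * Y) = 0 := by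
  induction hg using Submodule.span_induction with
  | mem g hg =>
    obtain ⟨x', hx', y', hy', v', u', hu', hr', rfl⟩ := hg
    exact h x' hx' y' hy' v' u' hu' hr'
  | zero => simp
  | add g g' _ _ h h' => rw [mul_add, add_mul, map_add, h, h', add_zero]
  | smul c g _ h => rw [mul_smul_comm, smul_mul_assoc, map_smul, h, smul_zero]

theorem C0 (H : Hyp A AA F φ Φ φ' Ai Fi) (L : List (ι × B)) :
    (∀ p ∈ L, p.2 ∈ Bi Ai Fi p.1) → ∀ z ∈ AA, ∀ y ∈ AA, ∀ v u,
    Red φ AA (⋃ i, (Fi i : Set B)) v u → Dead Φ (⋃ i, (Fi i : Set B)) u →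
    Φ (z * v * y * pr L) = 0 := by
  induction L with
  | nil =>
    intro _ z hz y hy v u hr hd
    have := hd [] (by simp)
    rw [List.prod_nil, mul_one] at this
    simp [pr, H.cam v u z y hr hz hy, this]
  | cons p L ih =>
    obtain ⟨j, b⟩ := p
    intro hL z hz y hy v u hr hd
    rw [List.forall_mem_cons] at hL
    obtain ⟨hb, hL⟩ := hL
    obtain ⟨a, ha, g, hg, e⟩ := decomp H hb
    simp only at e ha hg
    subst e
    rw [pr_cons, ← mul_assoc, mul_add, add_mul, map_add]
    have h1 : Φ (z * v * y * a * pr L) = 0 := by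
      rw [mul_assoc (z * v)]
      exact ih hL z hz (y * a) (mul_mem hy (H.AiAA j ha)) v u hr hd
    rw [h1, zero_add]
    refine Gi_zero hg fun x' hx' y' hy' v' u' hu' hr' => ?_
    have := ih hL z hz y' (H.AiAA j hy') _ _
      (hr.merge (mul_mem hy (H.AiAA j hx')) hr') ((hd.mul (mem_FF hu')).smul _)
    rw [← this]; simp only [mul_assoc]

theorem alt_mem {Alg : ι → Set B} {φ : B → ℂ} (L : List (ι × B)) :
    ∀ i, AltFrom φ Alg i L → ∀ p ∈ L, p.2 ∈ Alg p.1 := by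
  induction L with
  | nil => simp
  | cons q L ih =>
    obtain ⟨j, b⟩ := q
    rintro i ⟨h1, h2, h3, h4⟩ p hp
    rcases List.mem_cons.1 hp with rfl | hp
    · exact h2
    · exact ih j h4 p hp

/-- After a gap only letters from the `Ai` contribute. -/
theorem Cgap (H : Hyp A AA F φ Φ φ' Ai Fi) (L : List (ι × B)) :
    ∀ i, AltB φ Ai Fi i L → ∀ z ∈ AA, ∀ y ∈ AA, ∀ v u,
    Red φ AA (⋃ i, (Fi i : Set B)) v u → φ y = 0 → (∀ j, i ≠ j → Qr φ Ai Fi y j) →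
    Φ (z * v * y * pr L) = φ (z * y * pr L) * Φ u := by
  induction L with
  | nil =>
    intro i _ z hz y hy v u hr _ _
    simp [pr, H.cam v u z y hr hz hy]
  | cons p L ih =>
    obtain ⟨j, b⟩ := p
    rintro i ⟨hij, hb, hb0, hL⟩ z hz y hy v u hr hy0 hQ
    obtain ⟨a, ha, ha0, g, hg, e⟩ := decomp0 H hb hb0
    subst e
    rw [pr_cons, ← mul_assoc, ← mul_assoc, φ_drop H hg, mul_add, add_mul, map_add]
    have h1 := ih j hL z hz (y * a) (mul_mem hy (H.AiAA j ha)) v u hr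
      ((hQ j hij).self (Ai_le_Bi ha) ha0) (fun k hk => (hQ j hij).step (Ai_le_Bi ha) ha0 hk)
    rw [← mul_assoc, ← mul_assoc] at h1
    rw [h1, add_eq_left]
    refine Gi_zero hg fun x' hx' y' hy' v' u' hu' hr' => ?_
    have h2 : φ (y * x') = 0 := by
      have := Qr.split H (hQ j hij) (Ai_le_Bi hx') (L := []) trivial
      simpa [pr, hy0] using this
    have := C0 H L (alt_mem L j hL) z hz y' (H.AiAA j hy') _ _
      (hr.merge (mul_mem hy (H.AiAA j hx')) hr') (by rw [h2, zero_smul]; exact dead_zero)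
    rw [← this]; simp only [mul_assoc]

theorem Cone (H : Hyp A AA F φ Φ φ' Ai Fi) (L : List (ι × B)) (i : ι) (hL : AltB φ Ai Fi i L)
    {z y v u : B} (hz : z ∈ AA) (hy : y ∈ Ai i) (hu : u ∈ Fi i)
    (hr : Red φ AA (⋃ i, (Fi i : Set B)) v u) :
    Φ (z * v * y * pr L) = φ (z * y * pr L) * Φ u := by
  cases L with
  | nil => simp [pr, H.cam v u z y hr hz (H.AiAA i hy)]
  | cons p L =>
    obtain ⟨j, b⟩ := p
    obtain ⟨hij, hb, hb0, hL⟩ := hL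
    obtain ⟨a, ha, ha0, g, hg, e⟩ := decomp0 H hb hb0
    subst e
    rw [pr_cons, ← mul_assoc, ← mul_assoc, φ_drop H hg, mul_add, add_mul, map_add]
    have hQ : Qr φ Ai Fi y j := Qr.of_ne H (Ai_le_Bi hy) hij
    have h1 := Cgap H L j hL z hz (y * a) (mul_mem (H.AiAA i hy) (H.AiAA j ha)) v u hr
      (hQ.self (Ai_le_Bi ha) ha0) (fun k hk => hQ.step (Ai_le_Bi ha) ha0 hk)
    rw [← mul_assoc, ← mul_assoc] at h1
    rw [h1, add_eq_left]
    refine Gi_zero hg fun x' hx' y' hy' v' u' hu' hr' => ?_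
    have := C0 H L (alt_mem L j hL) z hz y' (H.AiAA j hy') _ _
      (hr.merge (mul_mem (H.AiAA i hy) (H.AiAA j hx')) hr') ((dead_mul H.triv hij hu hu').smul _)
    rw [← this]; simp only [mul_assoc]

theorem Cg (H : Hyp A AA F φ Φ φ' Ai Fi) (L : List (ι × B)) (i : ι) (hL : AltB φ Ai Fi i L)
    {z g : B} (hz : z ∈ AA) (hQ : Qr φ Ai Fi z i) (hg : g ∈ Gi φ AA Ai Fi i) :
    Φ (z * g * pr L) = Φ g * φ (z * pr L) := by
  induction hg using Submodule.span_induction with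
  | mem g hg =>
    obtain ⟨x, hx, y, hy, v, u, hu, hr, rfl⟩ := hg
    have h1 := Cone H L i hL (mul_mem hz (H.AiAA i hx)) hy hu hr
    have h2 := Qr.split H hQ (Ai_le_Bi (mul_mem hx hy)) hL
    rw [H.cam v u x y hr (H.AiAA i hx) (H.AiAA i hy)]
    rw [← mul_assoc] at h2
    rw [h2] at h1
    rw [← mul_assoc, ← mul_assoc, h1]
    ring
  | zero => simp
  | add g g' _ _ h h' => rw [mul_add, add_mul, map_add, h, h', map_add, add_mul]
  | smul c g _ h =>
    rw [mul_smul_comm, smul_mul_assoc, map_smul, h, map_smul, smul_eq_mul, smul_eq_mul, mul_assoc]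

/-- The sum over the position of the infinitesimal letter. -/
def Tsum (φ φ' : B →ₗ[ℂ] ℂ) (z : B) (L : List (ι × B)) : ℂ :=
  ∑ k ∈ Finset.range L.length,
    φ' ((L.map Prod.snd).getD k 0) * φ (z * pr (L.take k) * pr (L.drop (k + 1)))

theorem Tsum_cons (z : B) (p : ι × B) (L : List (ι × B)) :
    Tsum φ φ' z (p :: L) = φ' p.2 * φ (z * pr L) + Tsum φ φ' (z * p.2) L := by
  rw [Tsum, List.length_cons, Finset.sum_range_succ', add_comm]
  congr 1
  · simp [pr]
  · refine Finset.sum_congr rfl fun k _ => ?_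
    simp [pr, mul_assoc]

theorem Dform (H : Hyp A AA F φ Φ φ' Ai Fi) (L : List (ι × B)) :
    ∀ (j : ι) (b z : B), b ∈ Bi Ai Fi j → φ b = 0 → AltB φ Ai Fi j L → z ∈ AA →
    Qr φ Ai Fi z j → φ' (z * pr ((j, b) :: L)) = Tsum φ φ' z ((j, b) :: L) := by
  induction L with
  | nil =>
    intro j b z hb hb0 hL hz hQ
    obtain ⟨a, ha, ha0, g, hg, e⟩ := decomp0 H hb hb0
    subst e
    have h1 := Cg H [] j trivial hz hQ hg
    have hgF := Gi_le H hg
    simp only [pr, List.map_nil, List.prod_nil, mul_one] at h1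
    rw [Tsum_cons, Tsum]
    simp only [pr, List.map_nil, List.prod_nil, mul_one, List.map_cons, List.prod_cons,
      List.length_nil, Finset.range_zero, Finset.sum_empty, add_zero]
    rw [mul_add, map_add, map_add, H.φ'A a (H.AAA (H.AiAA j ha)),
      H.φ'A _ (H.AAA (mul_mem hz (H.AiAA j ha))), H.φ'F g hgF, H.φ'F _ (H.mulL _ _ hgF), h1]
    ring
  | cons p L ih =>
    obtain ⟨k, c⟩ := p
    intro j b z hb hb0 hL hz hQ
    obtain ⟨a, ha, ha0, g, hg, e⟩ := decomp0 H hb hb0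
    subst e
    have hgF := Gi_le H hg
    have h1 := Cg H _ j hL hz hQ hg
    have h2 := ih k c (z * a) hL.2.1 hL.2.2.1 hL.2.2.2 (mul_mem hz (H.AiAA j ha))
      (hQ.step (Ai_le_Bi ha) ha0 hL.1)
    have h3 : Tsum φ φ' (z * (a + g)) ((k, c) :: L) = Tsum φ φ' (z * a) ((k, c) :: L) := by
      refine Finset.sum_congr rfl fun l _ => ?_
      rw [mul_assoc (z * (a + g)), φ_drop H hg, mul_assoc (z * a)]
    rw [Tsum_cons, h3, ← h2]
    simp only [pr_cons (j, a + g)]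
    rw [← mul_assoc, mul_add, add_mul, map_add, map_add, H.φ'A a (H.AAA (H.AiAA j ha)),
      H.φ'F g hgF, H.φ'F _ (H.mulR _ _ (H.mulL _ _ hgF)), h1]
    ring

theorem pr_append (L M : List (ι × B)) : pr (L ++ M) = pr L * pr M := by simp [pr]

theorem E0 (H : Hyp A AA F φ Φ φ' Ai Fi) (P : List (ι × B)) :
    ∀ (j : ι) (c : B) (M : List (ι × B)), AltB φ Ai Fi j P → c ∈ Bi Ai Fi j → φ c = 0 →
    AltB φ Ai Fi j M → φ (pr P.reverse * c * pr M) = 0 := by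
  induction P with
  | nil =>
    intro j c M _ hc hc0 hM
    have := free_B H j c hc hc0 M hM
    simpa [pr] using this
  | cons p P ih =>
    obtain ⟨k, p⟩ := p
    rintro j c M ⟨h1, h2, h3, h4⟩ hc hc0 hM
    have := ih k p ((j, c) :: M) h4 h2 h3 ⟨h1.symm, hc, hc0, hM⟩
    rw [List.reverse_cons, pr_append]
    rw [pr_cons] at this
    rw [← this]
    simp [pr, mul_assoc]

open Classical in
theorem Eform (H : Hyp A AA F φ Φ φ' Ai Fi) (P : List (ι × B)) :
    ∀ (j : ι) (Q : List (ι × B)), AltB φ Ai Fi j P → AltB φ Ai Fi j Q →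
    φ (pr P.reverse * pr Q) = if P.map Prod.fst = Q.map Prod.fst then
      (List.zipWith (fun p q => φ (p.2 * q.2)) P Q).prod else 0 := by
  induction P with
  | nil =>
    intro j Q _ hQ
    cases Q with
    | nil => simp [pr, H.one]
    | cons q Q =>
      obtain ⟨k, q⟩ := q
      have := free_B H k q hQ.2.1 hQ.2.2.1 Q hQ.2.2.2
      simpa [pr] using this
  | cons p P ih =>
    obtain ⟨k, p⟩ := p
    rintro j Q ⟨h1, h2, h3, h4⟩ hQ
    have e0 : pr ((k, p) :: P).reverse = pr P.reverse * p := by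
      rw [List.reverse_cons, pr_append]; simp [pr]
    rw [e0]
    cases Q with
    | nil =>
      have := E0 H P k p [] h4 h2 h3 trivial
      simpa using this
    | cons q Q =>
      obtain ⟨l, q⟩ := q
      obtain ⟨g1, g2, g3, g4⟩ := hQ
      by_cases hkl : k = l
      · subst hkl
        have hQr : Qr φ Ai Fi (pr P.reverse) k := fun c hc hc0 M hM => E0 H P k c M h4 hc hc0 hM
        have := Qr.split H hQr (mul_mem h2 g2) g4
        rw [ih k Q h4 g4] at this
        rw [pr_cons, ← mul_assoc, mul_assoc (pr P.reverse), this]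
        simp
      · have := E0 H P k p ((l, q) :: Q) h4 h2 h3 ⟨hkl, g2, g3, g4⟩
        rw [this, if_neg]
        simp [hkl]

theorem alt_of_chain {Alg : ι → Set B} {φ : B → ℂ} (L : List (ι × B)) :
    ∀ p, (p :: L).IsChain (fun s t => s.1 ≠ t.1) → (∀ s ∈ L, s.2 ∈ Alg s.1 ∧ φ s.2 = 0) →
    AltFrom φ Alg p.1 L := by
  induction L with
  | nil => intro p _ _; trivial
  | cons q L ih =>
    intro p hc hm
    rw [List.forall_mem_cons] at hm
    rw [List.isChain_cons_cons] at hc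
    exact ⟨hc.1, hm.1.1, hm.1.2, ih q hc.2 hm.2⟩

open Classical in
theorem main_list (H : Hyp A AA F φ Φ φ' Ai Fi) (L : List (ι × B)) (hne : L ≠ [])
    (hc : L.IsChain (fun s t => s.1 ≠ t.1)) (hm : ∀ s ∈ L, s.2 ∈ Bi Ai Fi s.1 ∧ φ s.2 = 0) :
    φ' (pr L) = ∑ k ∈ Finset.range L.length, φ' ((L.map Prod.snd).getD k 0) *
      (if (L.take k).reverse.map Prod.fst = (L.drop (k + 1)).map Prod.fst then
        (List.zipWith (fun p q => φ (p.2 * q.2)) (L.take k).reverse (L.drop (k + 1))).prod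
        else 0) := by
  have h1 : φ' (pr L) = Tsum φ φ' 1 L := by
    cases L with
    | nil => exact absurd rfl hne
    | cons p L =>
      obtain ⟨j, b⟩ := p
      rw [List.forall_mem_cons] at hm
      have := Dform H L j b 1 hm.1.1 hm.1.2
        (alt_of_chain (Alg := fun i => (Bi Ai Fi i : Set B)) L (j, b) hc hm.2) (one_mem _)
        (Qr.one H j)
      rwa [one_mul] at this
  rw [h1, Tsum]
  refine Finset.sum_congr rfl fun k hk => ?_
  rw [Finset.mem_range] at hk
  congr 1
  have hs : L = L.take k ++ L[k] :: L.drop (k + 1) := by simp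
  have hc1 := hc
  rw [hs, List.isChain_append] at hc1
  have hc2 : (L[k] :: (L.take k).reverse).IsChain (fun s t => s.1 ≠ t.1) := by
    have : (L.take (k + 1)).IsChain (fun s t => s.1 ≠ t.1) := hc.take _
    rw [← List.take_append_getElem hk] at this
    have h3 := (List.isChain_reverse (R := fun s t : ι × B => s.1 ≠ t.1)
      (l := L.take k ++ [L[k]])).2 (this.imp fun _ _ h => h.symm)
    rwa [List.reverse_append, List.reverse_singleton, List.singleton_append] at h3
  have := Eform H (L.take k).reverse L[k].1 (L.drop (k + 1))
    (alt_of_chain (Alg := fun i => (Bi Ai Fi i : Set B)) _ _ hc2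
      fun s hs => hm s (List.mem_of_mem_take (List.mem_reverse.1 hs)))
    (alt_of_chain (Alg := fun i => (Bi Ai Fi i : Set B)) _ _ hc1.2.1
      fun s hs => hm s (List.mem_of_mem_drop hs))
  rw [List.reverse_reverse] at this
  rw [one_mul, this]
end

theorem statement5
    {B : Type*} [Ring B] [Algebra ℂ B]
    (A : Subalgebra ℂ B) (F : Submodule ℂ B)
    (hFmulL : ∀ b : B, ∀ f ∈ F, b * f ∈ F)
    (hFmulR : ∀ b : B, ∀ f ∈ F, f * b ∈ F)
    (hAF : ∀ x ∈ A, x ∈ F → x = 0)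
    (hdec : ∀ x : B, ∃ a ∈ A, ∃ f ∈ F, x = a + f)
    (φ Φ φ' : B →ₗ[ℂ] ℂ)
    (hφ1 : φ 1 = 1) (hφF : ∀ f ∈ F, φ f = 0)
    (hφ'A : ∀ a ∈ A, φ' a = 0) (hφ'F : ∀ f ∈ F, φ' f = Φ f)
    {ι : Type*}
    (Ai : ι → Subalgebra ℂ B) (hAi : ∀ i, Ai i ≤ A)
    (Fi : ι → NonUnitalSubalgebra ℂ B) (hFi : ∀ i, ∀ f ∈ Fi i, f ∈ F)
    (hfree : IsFreeFamily ⇑φ (fun i => (Ai i : Set B)))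
    (hcam : CyclicAntimonotone ⇑φ ⇑Φ
      (Algebra.adjoin ℂ (⋃ i, (Ai i : Set B)) : Set B)
      (NonUnitalAlgebra.adjoin ℂ (⋃ i, (Fi i : Set B)) : Set B))
    (htriv : TrivIndep ⇑Φ (fun i => (Fi i : Set B))) :
    IsInfFree ⇑φ ⇑φ'
      (fun i => (Algebra.adjoin ℂ ((Ai i : Set B) ∪ (Fi i : Set B)) : Set B)) := by
  have H : Hyp A (Algebra.adjoin ℂ (⋃ i, (Ai i : Set B))) F φ Φ φ' Ai Fi :=
    { mulL := hFmulL
      mulR := hFmulR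
      one := hφ1
      φF := hφF
      φ'A := hφ'A
      φ'F := hφ'F
      AiAA := fun i a ha => Algebra.subset_adjoin (Set.mem_iUnion.2 ⟨i, ha⟩)
      AAA := Algebra.adjoin_le (Set.iUnion_subset hAi)
      FiF := hFi
      free := hfree
      cam := fun v u x y hr hx hy => cam_red hcam (NonUnitalAlgebra.subset_adjoin ℂ) hr hx hy
      triv := htriv }
  have chain : ∀ (n : ℕ) (idx : Fin (n + 1) → ι) (b : Fin (n + 1) → B),
      (∀ k : Fin n, idx k.castSucc ≠ idx k.succ) →
      (List.ofFn fun k => (idx k, b k)).IsChain (fun s t => s.1 ≠ t.1) := by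
    intro n idx b h
    rw [List.isChain_iff_getElem]
    intro k hk
    rw [List.length_ofFn] at hk
    simp only [List.getElem_ofFn]
    exact h ⟨k, by omega⟩
  have mem : ∀ (n : ℕ) (idx : Fin (n + 1) → ι) (b : Fin (n + 1) → B),
      (∀ k, b k ∈ Bi Ai Fi (idx k)) → (∀ k, φ (b k) = 0) →
      ∀ s ∈ (List.ofFn fun k => (idx k, b k)), s.2 ∈ Bi Ai Fi s.1 ∧ φ s.2 = 0 := by
    intro n idx b h h0 s hs
    obtain ⟨k, rfl⟩ := (List.mem_ofFn' _ _).1 hs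
    exact ⟨h k, h0 k⟩
  have prL : ∀ (n : ℕ) (idx : Fin (n + 1) → ι) (b : Fin (n + 1) → B),
      pr (List.ofFn fun k => (idx k, b k)) = (List.ofFn b).prod := by
    intro n idx b
    rw [pr, List.map_ofFn]
    rfl
  have pal : ∀ (n : ℕ) (idx : Fin (n + 1) → ι) (b : Fin (n + 1) → B) (k : ℕ), k < n + 1 →
      (((List.ofFn fun k => (idx k, b k)).take k).reverse.map Prod.fst =
        ((List.ofFn fun k => (idx k, b k)).drop (k + 1)).map Prod.fst) →
      n = 2 * k ∧ ∀ k, idx k = idx k.rev := by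
    intro n idx b k hk h
    have hlen := congrArg List.length h
    simp at hlen
    have hn : n = 2 * k := by omega
    refine ⟨hn, ?_⟩
    have key : ∀ j (hj : j < k), idx ⟨k - 1 - j, by omega⟩ = idx ⟨k + 1 + j, by omega⟩ := by
      intro j hj
      have := List.getElem_of_eq h (i := j) (by simp; omega)
      simp only [List.getElem_map, List.getElem_reverse, List.getElem_take, List.getElem_drop,
        List.getElem_ofFn, List.length_take, List.length_ofFn] at this
      convert this using 3
      omega
    intro l
    rcases lt_trichotomy l.1 k with hl | hl | hl
    · have := key (k - 1 - l.1) (by omega)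
      convert this using 2
      · ext; simp; omega
      · ext; simp [Fin.val_rev]; omega
    · congr 1
      ext
      simp [Fin.val_rev]; omega
    · have := (key (l.1 - k - 1) (by omega)).symm
      have hl2 := l.2
      convert this using 2
      · ext; simp; omega
      · ext; simp [Fin.val_rev]; omega
  classical
  refine ⟨?_, ?_, ?_⟩
  · intro n idx b hne hb h0
    have hc := chain n idx b hne
    have hm := mem n idx b hb h0
    rw [← prL n idx b]
    rw [List.ofFn_succ] at hc hm ⊢
    rw [List.forall_mem_cons] at hm
    rw [pr_cons]
    exact free_B H (idx 0) (b 0) (hb 0) (h0 0) _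
      (alt_of_chain (Alg := fun i => (Bi Ai Fi i : Set B)) _ _ hc hm.2)
  · intro n idx b hne hb h0 hnot
    rw [← prL n idx b, main_list H _ (by simp) (chain n idx b hne) (mem n idx b hb h0)]
    refine Finset.sum_eq_zero fun k hk => ?_
    rw [Finset.mem_range, List.length_ofFn] at hk
    rw [if_neg, mul_zero]
    intro h
    obtain ⟨h1, h2⟩ := pal n idx b k hk h
    exact hnot ⟨⟨k, by omega⟩, h2⟩
  · intro m idx b hne hb h0 hpal
    rw [← prL (2 * m) idx b,
      main_list H _ (by simp) (chain (2 * m) idx b hne) (mem (2 * m) idx b hb h0)]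
    rw [Finset.sum_eq_single m]
    · rw [if_pos, mul_comm]
      · congr 1
        · rw [← Equiv.prod_comp (Fin.revPerm (n := m)), ← List.prod_ofFn]
          congr 1
          apply List.ext_getElem
          · simp; omega
          · intro j h1 h2
            rw [List.length_ofFn] at h2
            simp only [List.getElem_zipWith, List.getElem_reverse, List.getElem_take,
              List.getElem_drop, List.getElem_ofFn, List.length_take, List.length_ofFn]
            congr 3
            · ext; simp [Fin.val_rev]; omega
            · ext; simp [Fin.val_rev]; omega
        · congr 1
          rw [List.getD_eq_getElem _ _ (by simp; omega)]
          simp only [List.getElem_map, List.getElem_ofFn]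
      · apply List.ext_getElem
        · simp; omega
        · intro j h1 h2
          simp at h1
          simp only [List.getElem_map, List.getElem_reverse, List.getElem_take, List.getElem_drop,
            List.getElem_ofFn, List.length_take, List.length_ofFn]
          rw [hpal]
          congr 1
          ext; simp [Fin.val_rev]; omega
    · intro k hk hkm
      rw [Finset.mem_range, List.length_ofFn] at hk
      rw [if_neg, mul_zero]
      intro h
      obtain ⟨h1, h2⟩ := pal (2 * m) idx b k hk h
      omega
    · intro hm
      simp at hm
      omega

end TypeBPrime
end

section
/- Let (A_i)_{i∈I} be unital subalgebras of A, (F_i)_{i∈I} subalgebras of F, and P ∈ F with Φ(P) ≠ 0. Assume that (A_i)_{i∈I} are free with respect to φ and that the pair (⟨A_i : i∈I⟩, ⟨{P} ∪ ⋃_{i∈I} F_i⟩) of generated subalgebras is cyclic-antimonotone independent (i.e. ((A_i)_{i∈I}, (F_j)_{j∈I⊔{*}}) is weakly B′-free, where F_* := {c Pⁿ : c ∈ ℂ, n ≥ 1}). Then the type B′ subalgebras B_i := A_i⟨F_i⟩ (i ∈ I) are conditionally free with respect to (φ, φ_P) if and only if the subalgebras (F_i)_{i∈I} are Boolean independent with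 respect to φ_P. -/
open scoped BigOperators

namespace TypeBPrime

variable {B : Type*} [Ring B] [Algebra ℂ B]

/-- Span of alternating words of any length (possibly zero). -/
def wSpan (A₁ G : Set B) : Submodule ℂ B :=
  Submodule.span ℂ {x | ∃ (n : ℕ) (a : Fin (n + 1) → B) (f : Fin n → B),
    (∀ k, a k ∈ A₁) ∧ (∀ k, f k ∈ G) ∧ x = altWord a f}

theorem altWord_cons {n : ℕ} (a0 f0 : B) (a : Fin (n + 1) → B) (f : Fin n → B) :
    altWord (Fin.cons a0 a : Fin (n + 2) → B) (Fin.cons f0 f : Fin (n + 1) → B)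
      = a0 * (f0 * altWord a f) := by
  simp [altWord, List.ofFn_succ, mul_assoc]

theorem prod_Ioo_aux {n : ℕ} (h : Fin (n + 2) → ℂ) :
    ∏ k ∈ Finset.Ioo (0 : Fin (n + 2)) (Fin.last (n + 1)), h k
      = ∏ k : Fin n, h k.castSucc.succ := by
  have : Finset.Ioo (0 : Fin (n + 2)) (Fin.last (n + 1))
      = Finset.univ.map ((Fin.castSuccEmb (n := n)).trans
          (Fin.succEmb (n + 1))) := by
    ext k
    simp only [Finset.mem_Ioo, Finset.mem_map, Finset.mem_univ, true_and]
    constructor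
    · rintro ⟨h0, h1⟩
      refine ⟨⟨k.val - 1, ?_⟩, ?_⟩
      · simp only [Fin.lt_def, Fin.val_last, Fin.val_zero] at h0 h1; omega
      · simp only [Fin.lt_def, Fin.val_last, Fin.val_zero] at h0 h1
        apply Fin.ext; simp; omega
    · rintro ⟨j, rfl⟩
      simp [Fin.lt_def]
  rw [this, Finset.prod_map]
  rfl

theorem star {φ Φ : B → ℂ} {A₁ G : Set B} (h1 : (1 : B) ∈ A₁)
    (hcam : CyclicAntimonotone φ Φ A₁ G)
    {n : ℕ} (g : B) (hg : g ∈ G) (a : Fin (n + 1) → B) (f : Fin n → B)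
    (ha : ∀ k, a k ∈ A₁) (hf : ∀ k, f k ∈ G) :
    Φ (g * altWord a f) = (∏ k, φ (a k)) * Φ (g * (List.ofFn f).prod) := by
  have := hcam (n + 1) (Nat.succ_pos _) (Fin.cons 1 a) (Fin.cons g f)
    (by intro k; refine Fin.cases ?_ ?_ k <;> simp [h1, ha])
    (by intro k; refine Fin.cases ?_ ?_ k <;> simp [hg, hf])
  rw [altWord_cons, prod_Ioo_aux, one_mul] at this
  rw [this, Fin.prod_univ_castSucc]
  have hl : (Fin.cons 1 a : Fin (n + 2) → B) (Fin.last (n + 1)) = a (Fin.last n) := by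
    rw [← Fin.succ_last, Fin.cons_succ]
  rw [hl, List.ofFn_succ, List.prod_cons]
  simp only [Fin.cons_zero, Fin.cons_succ, one_mul]
  ring

theorem star0 {φ Φ : B → ℂ} {A₁ G : Set B} (h1 : (1 : B) ∈ A₁)
    (hcam : CyclicAntimonotone φ Φ A₁ G) (g : B) (hg : g ∈ G) (a : B) (ha : a ∈ A₁) :
    Φ (g * a) = φ a * Φ g := by
  have := star h1 hcam (n := 0) g hg (fun _ => a) Fin.elim0 (fun _ => ha) (fun k => k.elim0)
  simpa [altWord] using this

theorem starR {φ Φ : B →ₗ[ℂ] ℂ} {A₁ G : Set B} (h1 : (1 : B) ∈ A₁)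
    (hG : ∀ x ∈ G, ∀ y ∈ G, x * y ∈ G)
    (hcam : CyclicAntimonotone φ Φ A₁ G) (g : B) (hg : g ∈ G) (a : B) (ha : a ∈ A₁)
    (f : B) (hf : f ∈ G) (r : B) (hr : r ∈ wSpan A₁ G) :
    Φ (g * (a * (f * r))) = φ a * Φ (g * (f * r)) := by
  induction hr using Submodule.span_induction with
  | mem x hx =>
    obtain ⟨n, a', f', ha', hf', rfl⟩ := hx
    rw [← altWord_cons, star h1 hcam g hg, ← mul_assoc, star h1 hcam (g * f) (hG _ hg _ hf) _ _ ha' hf']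
    · rw [Fin.prod_univ_succ]
      simp [List.ofFn_succ, mul_assoc]
    · intro k; refine Fin.cases ?_ ?_ k <;> simp [ha, ha']
    · intro k; refine Fin.cases ?_ ?_ k <;> simp [hf, hf']
  | zero => simp
  | add x y _ _ hx hy => simp only [mul_add, map_add, hx, hy]
  | smul c x _ hx => simp only [mul_smul_comm, map_smul, hx, smul_eq_mul]; ring

theorem wSpan_one {A₁ G : Set B} (h1 : (1 : B) ∈ A₁) : (1 : B) ∈ wSpan A₁ G :=
  Submodule.subset_span ⟨0, fun _ => 1, Fin.elim0, fun _ => h1, fun k => k.elim0, by simp [altWord]⟩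

theorem wSpan_mulA {A₁ G : Set B} (hA : ∀ x ∈ A₁, ∀ y ∈ A₁, x * y ∈ A₁)
    (a : B) (ha : a ∈ A₁) (r : B) (hr : r ∈ wSpan A₁ G) : a * r ∈ wSpan A₁ G := by
  induction hr using Submodule.span_induction with
  | mem x hx =>
    obtain ⟨n, a', f', ha', hf', rfl⟩ := hx
    refine Submodule.subset_span
      ⟨n, (Fin.cons (a * a' 0) (fun k : Fin n => a' k.succ) : Fin (n + 1) → B), f', ?_, hf', ?_⟩
    · intro k; refine Fin.cases ?_ ?_ k
      · simpa using hA _ ha _ (ha' 0)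
      · simp [ha']
    · simp [altWord, mul_assoc]
  | zero => simp
  | add x y _ _ hx hy => rw [mul_add]; exact add_mem hx hy
  | smul c x _ hx => rw [mul_smul_comm]; exact Submodule.smul_mem _ _ hx

theorem wSpan_mulG {A₁ G : Set B} (h1 : (1 : B) ∈ A₁)
    (f : B) (hf : f ∈ G) (r : B) (hr : r ∈ wSpan A₁ G) : f * r ∈ wSpan A₁ G := by
  induction hr using Submodule.span_induction with
  | mem x hx =>
    obtain ⟨n, a', f', ha', hf', rfl⟩ := hx
    refine Submodule.subset_span
      ⟨n + 1, (Fin.cons 1 a' : Fin (n + 2) → B), (Fin.cons f f' : Fin (n + 1) → B), ?_, ?_, ?_⟩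
    · intro k; refine Fin.cases ?_ ?_ k <;> simp [h1, ha']
    · intro k; refine Fin.cases ?_ ?_ k <;> simp [hf, hf']
    · rw [altWord_cons, one_mul]
  | zero => simp
  | add x y _ _ hx hy => rw [mul_add]; exact add_mem hx hy
  | smul c x _ hx => rw [mul_smul_comm]; exact Submodule.smul_mem _ _ hx

/-- Words `f₁ a₁ ⋯ fₙ aₙ`, `n ≥ 1`. -/
inductive Tail (A₁ F₁ : Set B) : B → Prop
  | single (f a : B) : f ∈ F₁ → a ∈ A₁ → Tail A₁ F₁ (f * a)
  | cons (f a v : B) : f ∈ F₁ → a ∈ A₁ → Tail A₁ F₁ v → Tail A₁ F₁ (f * (a * v))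

theorem tail_of_ofFn {A₁ F₁ : Set B} : ∀ (n : ℕ) (f a : Fin (n + 1) → B), (∀ k, f k ∈ F₁) →
    (∀ k, a k ∈ A₁) → Tail A₁ F₁ (List.ofFn fun k => f k * a k).prod
  | 0, f, a, hf, ha => by simpa using Tail.single _ _ (hf 0) (ha 0)
  | n + 1, f, a, hf, ha => by
    rw [List.ofFn_succ, List.prod_cons, mul_assoc]
    exact Tail.cons _ _ _ (hf 0) (ha 0)
      (tail_of_ofFn n (fun k => f k.succ) (fun k => a k.succ) (fun k => hf _) (fun k => ha _))

theorem wordSet_tail {A₁ F₁ : Set B} {x : B} (hx : x ∈ wordSet A₁ F₁) :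
    ∃ a v, a ∈ A₁ ∧ Tail A₁ F₁ v ∧ x = a * v := by
  obtain ⟨n, hn, a, f, ha, hf, rfl⟩ := hx
  obtain ⟨m, rfl⟩ : ∃ m, n = m + 1 := ⟨n - 1, by omega⟩
  exact ⟨a 0, _, ha 0, tail_of_ofFn m f (fun k => a k.succ) hf (fun k => ha _), rfl⟩

theorem tail_wSpan {A₁ F₁ A₂ G : Set B} (h1 : (1 : B) ∈ A₂)
    (hA : ∀ x ∈ A₂, ∀ y ∈ A₂, x * y ∈ A₂) (hAA : A₁ ⊆ A₂) (hFG : F₁ ⊆ G)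
    {v : B} (hv : Tail A₁ F₁ v) (r : B) (hr : r ∈ wSpan A₂ G) : v * r ∈ wSpan A₂ G := by
  induction hv with
  | single f a hf ha =>
    rw [mul_assoc]; exact wSpan_mulG h1 f (hFG hf) _ (wSpan_mulA hA a (hAA ha) _ hr)
  | cons f a v hf ha _ ih =>
    rw [mul_assoc, mul_assoc]
    exact wSpan_mulG h1 f (hFG hf) _ (wSpan_mulA hA a (hAA ha) _ ih)

theorem typeB_wSpan {A₁ F₁ A₂ G : Set B} (h1 : (1 : B) ∈ A₂)
    (hA : ∀ x ∈ A₂, ∀ y ∈ A₂, x * y ∈ A₂) (hAA : A₁ ⊆ A₂) (hFG : F₁ ⊆ G)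
    {x : B} (hx : x ∈ typeBSub A₁ F₁) (r : B) (hr : r ∈ wSpan A₂ G) : x * r ∈ wSpan A₂ G := by
  obtain ⟨a, ha, w, hw, rfl⟩ := hx
  rw [add_mul]
  refine add_mem (wSpan_mulA hA a (hAA ha) _ hr) ?_
  change w ∈ Submodule.span ℂ (wordSet A₁ F₁) at hw
  induction hw using Submodule.span_induction with
  | mem x hx =>
    obtain ⟨a, v, ha, hv, rfl⟩ := wordSet_tail hx
    rw [mul_assoc]
    exact wSpan_mulA hA a (hAA ha) _ (tail_wSpan h1 hA hAA hFG hv r hr)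
  | zero => simp
  | add x y _ _ hx hy => rw [add_mul]; exact add_mem hx hy
  | smul c x _ hx => rw [smul_mul_assoc]; exact Submodule.smul_mem _ _ hx

theorem tail_reduce {φ Φ : B →ₗ[ℂ] ℂ} {A₁ F₁ A₂ G : Set B} (h1 : (1 : B) ∈ A₂)
    (hA : ∀ x ∈ A₂, ∀ y ∈ A₂, x * y ∈ A₂)
    (hG : ∀ x ∈ G, ∀ y ∈ G, x * y ∈ G) (hF₁ : ∀ x ∈ F₁, ∀ y ∈ F₁, x * y ∈ F₁)
    (hcam : CyclicAntimonotone φ Φ A₂ G) (hAA : A₁ ⊆ A₂) (hFG : F₁ ⊆ G)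
    {v : B} (hv : Tail A₁ F₁ v) : ∃ f ∈ F₁, ∃ a ∈ A₁, ∃ c : ℂ,
      ∀ g ∈ G, ∀ y ∈ A₂, ∀ r ∈ wSpan A₂ G,
        Φ (g * (y * (v * r))) = φ y * c * Φ (g * f * (a * r)) := by
  induction hv with
  | single f a hf ha =>
    refine ⟨f, hf, a, ha, 1, fun g hg y hy r hr => ?_⟩
    rw [mul_assoc f a r, starR h1 hG hcam g hg y hy f (hFG hf) _ (wSpan_mulA hA a (hAA ha) _ hr)]
    simp [mul_assoc]
  | cons f a v hf ha hv ih =>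
    obtain ⟨f', hf', a', ha', c, h⟩ := ih
    refine ⟨f * f', hF₁ _ hf _ hf', a', ha', φ a * c, fun g hg y hy r hr => ?_⟩
    rw [mul_assoc f, mul_assoc a, starR h1 hG hcam g hg y hy f (hFG hf) _
      (wSpan_mulA hA a (hAA ha) _ (tail_wSpan h1 hA hAA hFG hv r hr)), ← mul_assoc g f,
      h (g * f) (hG _ hg _ (hFG hf)) a (hAA ha) r hr]
    simp only [mul_assoc]

theorem word_reduce {φ Φ : B →ₗ[ℂ] ℂ} {A₁ F₁ A₂ G : Set B} (h1 : (1 : B) ∈ A₂)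
    (hA : ∀ x ∈ A₂, ∀ y ∈ A₂, x * y ∈ A₂)
    (hG : ∀ x ∈ G, ∀ y ∈ G, x * y ∈ G) (hF₁ : ∀ x ∈ F₁, ∀ y ∈ F₁, x * y ∈ F₁)
    (hcam : CyclicAntimonotone φ Φ A₂ G) (hAA : A₁ ⊆ A₂) (hFG : F₁ ⊆ G)
    {x : B} (hx : x ∈ wordSet A₁ F₁) : ∃ a0 ∈ A₁, ∃ f ∈ F₁, ∃ a ∈ A₁, ∃ c : ℂ,
      ∀ g ∈ G, ∀ y ∈ A₂, ∀ r ∈ wSpan A₂ G,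
        Φ (g * (y * (x * r))) = φ (y * a0) * c * Φ (g * f * (a * r)) := by
  obtain ⟨a0, v, ha0, hv, rfl⟩ := wordSet_tail hx
  obtain ⟨f, hf, a, ha, c, h⟩ := tail_reduce h1 hA hG hF₁ hcam hAA hFG hv
  refine ⟨a0, ha0, f, hf, a, ha, c, fun g hg y hy r hr => ?_⟩
  rw [← h g hg _ (hA _ hy _ (hAA ha0)) r hr]
  simp only [mul_assoc]

/-- Alternating products of letters of the sets `S i`, with the index of the last letter. -/
inductive Alt {ι : Type*} (S : ι → Set B) : ι → B → Prop
  | single (i : ι) (x : B) : x ∈ S i → Alt S i x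
  | snoc (i j : ι) (p x : B) : Alt S j p → j ≠ i → x ∈ S i → Alt S i (p * x)

theorem alt_exists {ι : Type*} {S : ι → Set B} {i : ι} {p : B} (h : Alt S i p) :
    ∃ (n : ℕ) (idx : Fin (n + 1) → ι) (c : Fin (n + 1) → B), idx (Fin.last n) = i ∧
      (∀ k : Fin n, idx k.castSucc ≠ idx k.succ) ∧ (∀ k, c k ∈ S (idx k)) ∧
      p = (List.ofFn c).prod := by
  induction h with
  | single i x hx => exact ⟨0, fun _ => i, fun _ => x, rfl, fun k => k.elim0, fun _ => hx, by simp⟩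
  | snoc i j p x _ hij hx ih =>
    obtain ⟨n, idx, c, hl, hne, hc, rfl⟩ := ih
    refine ⟨n + 1, (Fin.snoc idx i : Fin (n + 2) → ι), (Fin.snoc c x : Fin (n + 2) → B),
      by simp, ?_, ?_, ?_⟩
    · intro k
      refine Fin.lastCases ?_ (fun k => ?_) k
      · rw [Fin.succ_last, Fin.snoc_last, Fin.snoc_castSucc, hl]; exact hij
      · rw [Fin.snoc_castSucc, Fin.succ_castSucc, Fin.snoc_castSucc]; exact hne k
    · intro k
      refine Fin.lastCases ?_ (fun k => ?_) k
      · simpa using hx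
      · simpa using hc k
    · rw [List.ofFn_succ' (f := (Fin.snoc c x : Fin (n + 2) → B))]
      simp only [Fin.snoc_castSucc, Fin.snoc_last, List.concat_eq_append, List.prod_append,
        List.prod_singleton]

/-- Alternating list of centered elements, with a forbidden first index. -/
def Good {ι : Type*} (φ : B → ℂ) (S : ι → Set B) : Option ι → List (ι × B) → Prop
  | _, [] => True
  | o, (p :: l) => o ≠ some p.1 ∧ p.2 ∈ S p.1 ∧ φ p.2 = 0 ∧ Good φ S (some p.1) l

theorem good_ofFn {ι : Type*} (φ : B → ℂ) (S : ι → Set B) : ∀ (n : ℕ) (idx : Fin (n + 1) → ι)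
    (b : Fin (n + 1) → B), (∀ k : Fin n, idx k.castSucc ≠ idx k.succ) →
    (∀ k, b k ∈ S (idx k)) → (∀ k, φ (b k) = 0) → ∀ o : Option ι, o ≠ some (idx 0) →
    Good φ S o (List.ofFn fun k => (idx k, b k))
  | 0, idx, b, _, hb, h0, o, ho => by
    simp [Good, ho, hb, h0]
  | n + 1, idx, b, hne, hb, h0, o, ho => by
    rw [List.ofFn_succ]
    refine ⟨ho, hb 0, h0 0, ?_⟩
    refine good_ofFn φ S n (fun k => idx k.succ) (fun k => b k.succ)
      (fun k => ?_) (fun k => hb _) (fun k => h0 _) _ ?_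
    · have := hne k.succ
      rwa [← Fin.succ_castSucc] at this
    · have := hne 0
      simpa using this

theorem good_wSpan {ι : Type*} {φ : B → ℂ} {A₁ F₁ : ι → Set B} {A₂ G : Set B}
    (h1 : (1 : B) ∈ A₂)
    (hA : ∀ x ∈ A₂, ∀ y ∈ A₂, x * y ∈ A₂) (hAA : ∀ i, A₁ i ⊆ A₂) (hFG : ∀ i, F₁ i ⊆ G) :
    ∀ (l : List (ι × B)) (o : Option ι), Good φ (fun i => typeBSub (A₁ i) (F₁ i)) o l →
      (l.map Prod.snd).prod ∈ wSpan A₂ G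
  | [], _, _ => by simpa using wSpan_one h1
  | p :: l, o, h => by
    rw [List.map_cons, List.prod_cons]
    exact typeB_wSpan h1 hA (hAA _) (hFG _) h.2.1 _ (good_wSpan h1 hA hAA hFG l _ h.2.2.2)

/-- Centered elements. -/
def cent (φ : B → ℂ) (S : Set B) : Set B := {x | x ∈ S ∧ φ x = 0}

theorem alt_phi {ι : Type*} {φ : B → ℂ} {S : ι → Set B} (hfree : IsFreeFamily φ S)
    {i : ι} {p : B} (h : Alt (fun i => cent φ (S i)) i p) : φ p = 0 := by
  obtain ⟨n, idx, c, -, hne, hc, rfl⟩ := alt_exists h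
  exact hfree n idx c hne (fun k => (hc k).1) (fun k => (hc k).2)

theorem alt_mem_s7 {ι : Type*} {φ : B → ℂ} {S : ι → Set B} {A₂ : Set B}
    (hA : ∀ x ∈ A₂, ∀ y ∈ A₂, x * y ∈ A₂) (hAA : ∀ i, S i ⊆ A₂)
    {i : ι} {p : B} (h : Alt (fun i => cent φ (S i)) i p) : p ∈ A₂ := by
  induction h with
  | single i x hx => exact hAA i hx.1
  | snoc i j p x _ _ hx ih => exact hA _ ih _ (hAA i hx.1)

theorem center_split (φ : B →ₗ[ℂ] ℂ) (hφ1 : φ 1 = 1) (S : Subalgebra ℂ B) (y : B) (hy : y ∈ S) :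
    ∃ y0 ∈ cent φ (S : Set B), y = y0 + φ y • (1 : B) :=
  ⟨y - φ y • (1 : B), ⟨sub_mem hy (S.smul_mem (one_mem S) _), by simp [hφ1]⟩, by simp⟩

theorem alt_phi_mul {ι : Type*} {φ : B →ₗ[ℂ] ℂ} (hφ1 : φ 1 = 1) {S : ι → Subalgebra ℂ B}
    (hfree : IsFreeFamily φ (fun i => (S i : Set B)))
    {i j : ι} {p a : B} (h : Alt (fun i => cent φ (S i : Set B)) j p) (hij : j ≠ i) (ha : a ∈ S i) :
    φ (p * a) = 0 := by
  obtain ⟨a0, ha0, e⟩ := center_split φ hφ1 (S i) a ha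
  have h1 := alt_phi hfree (Alt.snoc i j p a0 h hij ha0)
  have h2 := alt_phi hfree h
  rw [e, mul_add, map_add, h1, mul_smul_comm, map_smul, mul_one, h2]
  simp

section main

variable {ι : Type*} {φ Φ : B →ₗ[ℂ] ℂ} (hφ1 : φ 1 = 1)
    {Ai : ι → Subalgebra ℂ B} {Fi : ι → NonUnitalSubalgebra ℂ B} {A₂ G : Set B}

/-- Vanishing claim. -/
theorem claimZ (hφ1 : φ 1 = 1)
    (hfree : IsFreeFamily ⇑φ (fun i => (Ai i : Set B)))
    (h1 : (1 : B) ∈ A₂) (hA : ∀ x ∈ A₂, ∀ y ∈ A₂, x * y ∈ A₂)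
    (hG : ∀ x ∈ G, ∀ y ∈ G, x * y ∈ G)
    (hcam : CyclicAntimonotone φ Φ A₂ G)
    (hAA : ∀ i, (Ai i : Set B) ⊆ A₂) (hFG : ∀ i, (Fi i : Set B) ⊆ G)
    (hφw : ∀ i, ∀ w ∈ wordSpan (Ai i : Set B) (Fi i : Set B), φ w = 0)
    (g : B) (hg : g ∈ G) :
    ∀ (l : List (ι × B)) (j : ι) (p : B), Alt (fun i => cent φ (Ai i : Set B)) j p →
      Good φ (fun i => typeBSub (Ai i : Set B) (Fi i : Set B)) (some j) l →
      Φ (g * (p * (l.map Prod.snd).prod)) = 0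
  | [], j, p, hp, _ => by
    rw [List.map_nil, List.prod_nil, mul_one, star0 h1 hcam g hg p (alt_mem_s7 hA hAA hp),
      alt_phi hfree hp, zero_mul]
  | (i, x) :: l, j, p, hp, hl => by
    obtain ⟨hji', hx, hx0, hl⟩ := hl
    have hji : j ≠ i := fun h => hji' (by rw [h])
    clear hji'
    obtain ⟨a, ha, w, hw, e⟩ := hx
    dsimp only at ha hw e hx0 hl
    subst e
    have ha0 : φ a = 0 := by rw [map_add, hφw i w hw, add_zero] at hx0; exact hx0
    have hr := good_wSpan h1 hA hAA hFG l _ hl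
    rw [List.map_cons, List.prod_cons]
    set r := (l.map Prod.snd).prod
    have e1 : Φ (g * (p * (a * r))) = 0 := by
      rw [← mul_assoc p a]
      exact claimZ hφ1 hfree h1 hA hG hcam hAA hFG hφw g hg l i (p * a)
        (Alt.snoc i j p a hp hji ⟨ha, ha0⟩) hl
    have e2 : Φ (g * (p * (w * r))) = 0 := by
      change w ∈ Submodule.span ℂ (wordSet (Ai i : Set B) (Fi i : Set B)) at hw
      clear hx0
      induction hw using Submodule.span_induction with
      | mem x hx =>
        obtain ⟨a0, ha0, f, hf, a', ha', c, h⟩ := word_reduce h1 hA hG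
          (fun x hx y hy => mul_mem hx hy) hcam (hAA i) (hFG i) hx
        rw [h g hg p (alt_mem_s7 hA hAA hp) r hr, alt_phi_mul hφ1 hfree hp hji ha0]
        simp
      | zero => simp
      | add x y _ _ hx hy => rw [add_mul, mul_add, mul_add, map_add, hx, hy, add_zero]
      | smul c x _ hx =>
        rw [smul_mul_assoc, mul_smul_comm, mul_smul_comm, map_smul, hx, smul_zero]
    simp only [add_mul, mul_add, map_add, e1, e2, add_zero]

/-- Factorization claim. -/
theorem claimN (hφ1 : φ 1 = 1)
    (hfree : IsFreeFamily ⇑φ (fun i => (Ai i : Set B)))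
    (h1 : (1 : B) ∈ A₂) (hA : ∀ x ∈ A₂, ∀ y ∈ A₂, x * y ∈ A₂)
    (hG : ∀ x ∈ G, ∀ y ∈ G, x * y ∈ G)
    (hcam : CyclicAntimonotone φ Φ A₂ G)
    (hAA : ∀ i, (Ai i : Set B) ⊆ A₂) (hFG : ∀ i, (Fi i : Set B) ⊆ G)
    (hφw : ∀ i, ∀ w ∈ wordSpan (Ai i : Set B) (Fi i : Set B), φ w = 0)
    (P : B) (hP : P ∈ G) (hΦP : Φ P ≠ 0) (H : Option ι → B → Prop)
    (HG : ∀ o g, H o g → g ∈ G)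
    (Hs : ∀ o g, H o g → ∀ i, o ≠ some i → ∀ f ∈ Fi i,
      H (some i) (g * f) ∧ Φ (g * f) = Φ g * (Φ (P * f) / Φ P)) :
    ∀ (l : List (ι × B)) (o : Option ι) (g y0 : B) (c : ℂ), H o g →
      (y0 = 0 ∨ ∃ j, o = some j ∧ y0 ∈ cent φ (Ai j : Set B)) →
      Good φ (fun i => typeBSub (Ai i : Set B) (Fi i : Set B)) o l →
      Φ (g * ((y0 + c • (1 : B)) * (l.map Prod.snd).prod)) =
        c * Φ g * (l.map fun p => Φ (P * p.2) / Φ P).prod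
  | [], o, g, y0, c, hH, hy, _ => by
    have hg := HG _ _ hH
    have : Φ (g * y0) = 0 := by
      rcases hy with rfl | ⟨j, -, hy⟩
      · simp
      · rw [star0 h1 hcam g hg y0 (hAA j hy.1), hy.2, zero_mul]
    simp [mul_add, this]
  | (i, x) :: l, o, g, y0, c, hH, hy, hl => by
    have hg := HG _ _ hH
    obtain ⟨hji, hx, hx0, hl⟩ := hl
    obtain ⟨a, ha, w, hw, e⟩ := hx
    dsimp only at hji ha hw e hx0 hl
    subst e
    have ha0 : φ a = 0 := by rw [map_add, hφw i w hw, add_zero] at hx0; exact hx0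
    have hr := good_wSpan h1 hA hAA hFG l _ hl
    have IH := claimN hφ1 hfree h1 hA hG hcam hAA hFG hφw P hP hΦP H HG Hs l (some i)
    rw [List.map_cons, List.prod_cons, List.map_cons, List.prod_cons]
    set r := (l.map Prod.snd).prod
    set R := (l.map fun p => Φ (P * p.2) / Φ P).prod
    have Z := claimZ hφ1 hfree h1 hA hG hcam hAA hFG hφw g hg l i
    have e0 : Φ (P * a) = 0 := by rw [star0 h1 hcam P hP a (hAA i ha), ha0, zero_mul]
    have e1 : Φ (g * ((y0 + c • (1 : B)) * (a * r))) = 0 := by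
      have z1 : Φ (g * (a * r)) = 0 := Z a (Alt.single i a ⟨ha, ha0⟩) hl
      have z2 : Φ (g * (y0 * (a * r))) = 0 := by
        rcases hy with rfl | ⟨j, rfl, hy⟩
        · simp
        · rw [← mul_assoc y0]
          exact Z (y0 * a) (Alt.snoc i j y0 a (Alt.single j y0 hy) (fun h => hji (by rw [h]))
            ⟨ha, ha0⟩) hl
      rw [add_mul, mul_add, map_add, z2, smul_mul_assoc, one_mul, mul_smul_comm, map_smul, z1]
      simp
    have e2 : Φ (g * ((y0 + c • (1 : B)) * (w * r))) = c * Φ g * ((Φ (P * w) / Φ P) * R) := by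
      change w ∈ Submodule.span ℂ (wordSet (Ai i : Set B) (Fi i : Set B)) at hw
      clear hx0
      induction hw using Submodule.span_induction with
      | mem x hx =>
        obtain ⟨a0, ha0, f, hf, a', ha', d, h⟩ := word_reduce h1 hA hG
          (fun x hx y hy => mul_mem hx hy) hcam (hAA i) (hFG i) hx
        obtain ⟨b0, hb0, eb⟩ := center_split φ hφ1 (Ai i) a' ha'
        obtain ⟨hH', hval⟩ := Hs o g hH i hji f hf
        have k1 : Φ (g * f * (a' * r)) = φ a' * Φ (g * f) * R := by
          have := IH (g * f) b0 (φ a') hH' (Or.inr ⟨i, rfl, hb0⟩) hl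
          rwa [← eb] at this
        have k2 : Φ (g * (y0 * (x * r))) = 0 := by
          rcases hy with rfl | ⟨j, rfl, hy⟩
          · simp
          · rw [h g hg y0 (hAA j hy.1) r hr, alt_phi_mul hφ1 hfree (Alt.single j y0 hy)
              (fun h => hji (by rw [h])) ha0]
            simp
        have k3 : Φ (P * x) = φ a0 * d * (φ a' * Φ (P * f)) := by
          have := h P hP 1 h1 1 (wSpan_one h1)
          rw [mul_one, one_mul, one_mul, mul_one,
            star0 h1 hcam (P * f) (hG _ hP _ (hFG i hf)) a' (hAA i ha')] at this
          exact this
        have k4 : Φ (g * (x * r)) = φ a0 * d * Φ (g * f * (a' * r)) := by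
          have := h g hg 1 h1 r hr
          rwa [one_mul, one_mul] at this
        rw [add_mul, mul_add, map_add, k2, smul_mul_assoc, one_mul, mul_smul_comm, map_smul, k4,
          k1, hval, k3, smul_eq_mul]
        ring
      | zero => simp
      | add x y _ _ hx hy =>
        rw [add_mul x y, mul_add (y0 + c • (1 : B)), mul_add g, map_add, hx, hy, mul_add P, map_add]
        ring
      | smul c x _ hx =>
        rw [smul_mul_assoc, mul_smul_comm, mul_smul_comm, map_smul, hx, mul_smul_comm, map_smul,
          smul_eq_mul, smul_eq_mul]; ring
    rw [add_mul a w, mul_add (y0 + c • (1 : B)), mul_add g, map_add, e1, e2, mul_add P, map_add,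
      e0, zero_add, zero_add]

end main

theorem prod_sub_mem {F : Submodule ℂ B} (hFmulL : ∀ b : B, ∀ f ∈ F, b * f ∈ F)
    (hFmulR : ∀ b : B, ∀ f ∈ F, f * b ∈ F) : ∀ (n : ℕ) (a b : Fin n → B),
    (∀ k, b k - a k ∈ F) → (List.ofFn b).prod - (List.ofFn a).prod ∈ F
  | 0, a, b, _ => by simp
  | n + 1, a, b, h => by
    have ih := prod_sub_mem hFmulL hFmulR n (fun k => a k.succ) (fun k => b k.succ) (fun k => h _)
    rw [List.ofFn_succ, List.ofFn_succ, List.prod_cons, List.prod_cons]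
    have := add_mem (hFmulL (b 0) _ ih) (hFmulR (List.ofFn fun k => a (Fin.succ k)).prod _ (h 0))
    rw [mul_sub, sub_mul] at this
    simpa using this

theorem wordSpan_mem {F : Submodule ℂ B} (hFmulL : ∀ b : B, ∀ f ∈ F, b * f ∈ F)
    (hFmulR : ∀ b : B, ∀ f ∈ F, f * b ∈ F) {A₁ F₁ : Set B} (hF : ∀ f ∈ F₁, f ∈ F)
    {w : B} (hw : w ∈ wordSpan A₁ F₁) : w ∈ F := by
  refine (Submodule.span_le (p := F)).2 ?_ hw
  intro x hx
  obtain ⟨a, v, _, hv, rfl⟩ := wordSet_tail hx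
  refine hFmulL _ _ ?_
  cases hv with
  | single f a hf _ => exact hFmulR _ _ (hF _ hf)
  | cons f a v hf _ _ => exact hFmulR _ _ (hF _ hf)

theorem statement7
    {B : Type*} [Ring B] [Algebra ℂ B]
    (A : Subalgebra ℂ B) (F : Submodule ℂ B)
    (hFmulL : ∀ b : B, ∀ f ∈ F, b * f ∈ F)
    (hFmulR : ∀ b : B, ∀ f ∈ F, f * b ∈ F)
    (hAF : ∀ x ∈ A, x ∈ F → x = 0)
    (hdec : ∀ x : B, ∃ a ∈ A, ∃ f ∈ F, x = a + f)
    (φ Φ : B →ₗ[ℂ] ℂ)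
    (hφ1 : φ 1 = 1) (hφF : ∀ f ∈ F, φ f = 0)
    {ι : Type*}
    (Ai : ι → Subalgebra ℂ B) (hAi : ∀ i, Ai i ≤ A)
    (Fi : ι → NonUnitalSubalgebra ℂ B) (hFi : ∀ i, ∀ f ∈ Fi i, f ∈ F)
    (P : B) (hP : P ∈ F) (hΦP : Φ P ≠ 0)
    (hfree : IsFreeFamily ⇑φ (fun i => (Ai i : Set B)))
    (hcam : CyclicAntimonotone ⇑φ ⇑Φ
      (Algebra.adjoin ℂ (⋃ i, (Ai i : Set B)) : Set B)
      (NonUnitalAlgebra.adjoin ℂ ({P} ∪ ⋃ i, (Fi i : Set B)) : Set B)) :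
    CFree ⇑φ (fun b => Φ (P * b) / Φ P)
        (fun i => typeBSub (Ai i : Set B) (Fi i : Set B)) ↔
      BoolIndep (fun b => Φ (P * b) / Φ P) (fun i => (Fi i : Set B)) := by
  have hφw : ∀ i, ∀ w ∈ wordSpan (Ai i : Set B) (Fi i : Set B), φ w = 0 := fun i w hw =>
    hφF _ (wordSpan_mem hFmulL hFmulR (hFi i) hw)
  constructor
  · rintro ⟨-, hc⟩ n idx c hne hmem
    refine hc n idx c hne (fun k => ?_) (fun k => hφF _ (hFi _ _ (hmem k)))
    refine ⟨0, zero_mem (Ai (idx k)), c k, Submodule.subset_span ?_, (zero_add _).symm⟩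
    exact ⟨1, one_pos, fun _ => 1, fun _ => c k, fun _ => one_mem (Ai (idx k)), fun _ => hmem k,
      by simp [altWord]⟩
  · intro hB
    refine ⟨?_, ?_⟩
    · intro n idx b hne hb h0
      choose a ha w hw e using hb
      have hwF : ∀ k, w k ∈ F := fun k => wordSpan_mem hFmulL hFmulR (hFi _) (hw k)
      have h1 := prod_sub_mem hFmulL hFmulR (n + 1) a b (fun k => by
        rw [e k]; simpa using hwF k)
      have h2 := hφF _ h1
      rw [map_sub, hfree n idx a hne ha (fun k => by
        have := h0 k
        rwa [e k, map_add, hφF _ (hwF k), add_zero] at this), sub_zero] at h2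
      exact h2
    · intro n idx b hne hb h0
      have hPG : P ∈ (NonUnitalAlgebra.adjoin ℂ ({P} ∪ ⋃ i, (Fi i : Set B)) : Set B) :=
        NonUnitalAlgebra.subset_adjoin ℂ (Or.inl rfl)
      have hFG : ∀ i, (Fi i : Set B) ⊆
          (NonUnitalAlgebra.adjoin ℂ ({P} ∪ ⋃ i, (Fi i : Set B)) : Set B) := fun i x hx =>
        NonUnitalAlgebra.subset_adjoin ℂ (Or.inr (Set.mem_iUnion.2 ⟨i, hx⟩))
      have hAA : ∀ i, (Ai i : Set B) ⊆ (Algebra.adjoin ℂ (⋃ i, (Ai i : Set B)) : Set B) :=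
        fun i x hx => Algebra.subset_adjoin (Set.mem_iUnion.2 ⟨i, hx⟩)
      have key := claimN (Ai := Ai) (Fi := Fi) hφ1 hfree
        (one_mem (Algebra.adjoin ℂ (⋃ i, (Ai i : Set B))))
        (fun x hx y hy => mul_mem hx hy) (fun x hx y hy => mul_mem hx hy) hcam hAA hFG hφw P hPG hΦP
        (fun o g => (o = none ∧ g = P) ∨
          ∃ j q, o = some j ∧ g = P * q ∧ Alt (fun i => (Fi i : Set B)) j q)
        (by
          rintro o g (⟨-, rfl⟩ | ⟨j, q, -, rfl, hq⟩)
          · exact hPG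
          · refine mul_mem hPG ?_
            induction hq with
            | single i x hx => exact hFG i hx
            | snoc i j p x _ _ hx ih => exact mul_mem ih (hFG i hx))
        (by
          rintro o g (⟨-, rfl⟩ | ⟨j, q, rfl, rfl, hq⟩) i hi f hf
          · refine ⟨Or.inr ⟨i, f, rfl, rfl, Alt.single i f hf⟩, ?_⟩
            field_simp
          · have hji : j ≠ i := fun h => hi (by rw [h])
            refine ⟨Or.inr ⟨i, q * f, rfl, mul_assoc _ _ _, Alt.snoc i j q f hq hji hf⟩, ?_⟩
            obtain ⟨m, ix, c, hl, hne, hc, rfl⟩ := alt_exists hq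
            have b1 := hB m ix c hne hc
            have b2 := hB (m + 1) (Fin.snoc ix i : Fin (m + 2) → ι) (Fin.snoc c f : Fin (m + 2) → B)
              (by
                intro k
                refine Fin.lastCases ?_ (fun k => ?_) k
                · rw [Fin.succ_last, Fin.snoc_last, Fin.snoc_castSucc, hl]; exact hji
                · rw [Fin.snoc_castSucc, Fin.succ_castSucc, Fin.snoc_castSucc]; exact hne k)
              (by
                intro k
                refine Fin.lastCases ?_ (fun k => ?_) k
                · simpa using hf
                · simpa using hc k)
            rw [Fin.prod_univ_castSucc, List.ofFn_succ'] at b2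
            simp only [Fin.snoc_castSucc, Fin.snoc_last, List.concat_eq_append, List.prod_append,
              List.prod_singleton] at b2
            rw [← b1, ← mul_assoc] at b2
            field_simp at b2 ⊢
            linear_combination b2)
        (List.ofFn fun k => (idx k, b k)) none P 0 1 (Or.inl ⟨rfl, rfl⟩) (Or.inl rfl)
        (good_ofFn _ _ n idx b hne hb h0 none (by simp))
      rw [List.map_ofFn, List.map_ofFn, zero_add, one_smul, one_mul, one_mul, List.prod_ofFn
        (f := (fun p : ι × B => Φ (P * p.2) / Φ P) ∘ fun k => (idx k, b k))] at key
      change Φ (P * (List.ofFn b).prod) / Φ P = ∏ k, Φ (P * b k) / Φ P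
      change Φ (P * (List.ofFn b).prod) = Φ P * ∏ k, Φ (P * b k) / Φ P at key
      rw [key]
      field_simp

end TypeBPrime
end
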